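/- arXiv:2104.03108 — 4 statements merged into one kernel-verified Lean document; each statement's English description precedes it below -/
import Mathlib

section
/- (Fundamental lemma.) Suppose (A,B) is controllable and let z_{[0,T-1]} (with z(k)=[y(k);u(k)]) be a measured trajectory of Σ whose input component u_{[0,T-1]} is persistently exciting of order L+n. Then a pair of sequences (ū,ȳ) on {0,…,L-1}, stacked as z̄_{[0,L-1]} with z̄(k)=[ȳ(k);ū(k)], is a trajectory of Σ if and only if there exists a vector α ∈ ℝ^{T-L+1} such that H_L(z_{[0,T-1]}) α = z̄_{[0,L-1]}. -/
open Matrix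

/-!
A left annihilator `(ξ, η)` of the stacked state-input data satisfies
`ξ ⬝ x(j) + ∑ i, η i ⬝ u(i + j) = 0` for all admissible `j`. Substituting the dynamics `k` times
turns it into a relation with row `ξ A ^ k` on the state and input coefficients
`(ξ A ^ (k - 1) B, …, ξ B, η 0, …, η (L - 1))`. Combining these relations over `k ≤ d` with the
coefficients of a monic polynomial of degree `d` that annihilates `A` eliminates the state, so
persistency of excitation of order `L + d` makes the combined input coefficients vanish. As the
polynomial is monic, they depend on the individual ones in a triangular way; hence `η = 0` and
`ξ A ^ t B = 0` for `t < d`, and `ξ = 0` by controllability. So the data realise every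
initial state together with every input of length `L`, and linearity does the rest.
-/

section LinearAlgebra

theorem vecMul_injective_of_rank_eq_card {K ι κ : Type*} [Field K] [Fintype ι] [Fintype κ]
    {M : Matrix ι κ K} (h : M.rank = Fintype.card ι) : Function.Injective fun v ↦ v ᵥ* M := by
  rw [vecMul_injective_iff, linearIndependent_iff_card_eq_finrank_span, ← h,
    rank_eq_finrank_span_row]
  rfl

theorem mulVec_surjective_of_vecMul_injective {K ι κ : Type*} [Field K] [Fintype ι] [Fintype κ]
    {M : Matrix ι κ K} (h : Function.Injective fun v ↦ v ᵥ* M) : Function.Surjective M.mulVec := by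
  have hrank : M.rank = Fintype.card ι := (vecMul_injective_iff.mp h).rank_matrix
  refine (LinearMap.range_eq_top (f := M.mulVecLin)).mp (Submodule.eq_top_of_finrank_eq ?_)
  rwa [Module.finrank_fintype_fun_eq_card]

theorem vecMul_pow_mul_eq_zero_of_monic {R σ ι : Type*} [CommRing R] [Fintype σ] [DecidableEq σ]
    {A : Matrix σ σ R} {B : Matrix σ ι R} {q : Polynomial R} (hq : q.Monic)
    (hA : Polynomial.aeval A q = 0) {ξ : σ → R}
    (h : ∀ t < q.natDegree, ξ ᵥ* (A ^ t * B) = 0) (t : ℕ) : ξ ᵥ* (A ^ t * B) = 0 := by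
  nontriviality R
  have hpow : A ^ t = Polynomial.aeval A (Polynomial.X ^ t %ₘ q) := by
    rw [Polynomial.aeval_modByMonic_eq_self_of_root hA, map_pow, Polynomial.aeval_X]
  rw [hpow, Polynomial.aeval_eq_sum_range, Matrix.sum_mul, vecMul_sum]
  refine Finset.sum_eq_zero fun k _ ↦ ?_
  rw [smul_mul, vecMul_smul]
  obtain hk | hk := lt_or_ge k q.natDegree
  · rw [h k hk, smul_zero]
  · have hdeg : (Polynomial.X ^ t %ₘ q).degree < k :=
      (Polynomial.degree_modByMonic_lt _ hq).trans_le (Polynomial.degree_le_of_natDegree_le hk)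
    rw [Polynomial.coeff_eq_zero_of_degree_lt hdeg, zero_smul]

theorem eq_zero_of_monic_shift_combination {R M : Type*} [Semiring R] [AddCommMonoid M]
    [Module R M] {q : Polynomial R} (hq : q.Monic) {e : ℕ → M} {N : ℕ} (he : ∀ i ≥ N, e i = 0)
    (h : ∀ i < N, ∑ k ∈ Finset.range (q.natDegree + 1),
      q.coeff k • e (i + (q.natDegree - k)) = 0) (i : ℕ) : e i = 0 := by
  suffices hdown : ∀ s i, N ≤ i + s → e i = 0 from hdown N i (Nat.le_add_left N i)
  intro s
  induction s with
  | zero => exact he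
  | succ s ih =>
    intro i hi
    obtain hiN | hiN := le_or_gt N i
    · exact he i hiN
    · have hlower : ∑ k ∈ Finset.range q.natDegree,
          q.coeff k • e (i + (q.natDegree - k)) = 0 :=
        Finset.sum_eq_zero fun k hk ↦ by
          rw [ih _ (by have := Finset.mem_range.mp hk; omega), smul_zero]
      simpa [Finset.sum_range_succ, hlower, hq.coeff_natDegree] using h i hiN

theorem exists_monic_aeval_eq_zero_natDegree_eq {K S : Type*} [Field K] [Ring S] [Algebra K S]
    {a : S} (ha : IsIntegral K a) {d : ℕ} (hd : (minpoly K a).natDegree ≤ d) :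
    ∃ q : Polynomial K, q.Monic ∧ Polynomial.aeval a q = 0 ∧ q.natDegree = d := by
  have hmonic := minpoly.monic ha
  refine ⟨minpoly K a * Polynomial.X ^ (d - (minpoly K a).natDegree),
    hmonic.mul (Polynomial.monic_X_pow _), by rw [map_mul, minpoly.aeval, zero_mul], ?_⟩
  rw [hmonic.natDegree_mul (Polynomial.monic_X_pow _), Polynomial.natDegree_X_pow,
    Nat.add_sub_cancel' hd]

theorem minpoly_natDegree_le_card {K σ : Type*} [Field K] [Fintype σ] [DecidableEq σ]
    (A : Matrix σ σ K) : (minpoly K A).natDegree ≤ Fintype.card σ :=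
  A.charpoly_natDegree_eq_dim ▸
    Polynomial.natDegree_le_of_dvd A.minpoly_dvd_charpoly A.charpoly_monic.ne_zero

end LinearAlgebra

section Hankel

variable {R ι : Type*}

/-- The Hankel matrix `H_L(e_{[0,T-1]})`, whose `(i, j)` block is `e (i + j)`. The signal is total
on `ℕ`, and only its values at `k < T` occur when `L ≤ T`; the column count `T - L + 1` is
truncated to `1` otherwise. -/
def hankelMatrix (L T : ℕ) (e : ℕ → ι → R) : Matrix (Fin L × ι) (Fin (T - L + 1)) R :=
  of fun ir j ↦ e (ir.1 + j) ir.2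

/-- The states `x(j)` stacked on top of the depth-`L` windows of the input starting at `j`; its left
kernel consists of the linear relations between states and subsequent inputs in the data. -/
def stateInputMatrix {σ : Type*} (L T : ℕ) (x : ℕ → σ → R) (u : ℕ → ι → R) :
    Matrix (σ ⊕ Fin L × ι) (Fin (T - L + 1)) R :=
  fromRows (of fun s j ↦ x j s) (hankelMatrix L T u)

/-- Persistency of excitation of order `L` of `e_{[0,T-1]}`: its Hankel matrix of depth `L` has
full row rank. -/
def IsPersistentlyExciting [CommRing R] [Fintype ι] (L T : ℕ) (e : ℕ → ι → R) : Prop :=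
  (hankelMatrix L T e).rank = Fintype.card ι * L

theorem hankelMatrix_mulVec [CommSemiring R] {L T : ℕ} (e : ℕ → ι → R)
    (α : Fin (T - L + 1) → R) (i : Fin L) :
    (fun r ↦ (hankelMatrix L T e *ᵥ α) (i, r)) = ∑ j, α j • e (i + j) := by
  ext r
  simp [hankelMatrix, mulVec, dotProduct, mul_comm]

theorem hankelMatrix_sumElim_mulVec_eq_iff {ο : Type*} [CommSemiring R] {L T : ℕ}
    {u ub : ℕ → ι → R} {y yb : ℕ → ο → R} {α : Fin (T - L + 1) → R} :
    (∀ i : Fin L, (fun s ↦ (hankelMatrix L T (fun k ↦ Sum.elim (y k) (u k)) *ᵥ α) (i, s)) =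
        Sum.elim (yb i) (ub i)) ↔
      (∀ k < L, ∑ j, α j • y (k + j) = yb k) ∧ ∀ k < L, ∑ j, α j • u (k + j) = ub k := by
  have hsplit (k : ℕ) : ∑ j, α j • Sum.elim (y (k + j)) (u (k + j)) =
      Sum.elim (∑ j, α j • y (k + j)) (∑ j, α j • u (k + j)) := by
    ext (s | s) <;> simp
  simp only [hankelMatrix_mulVec, hsplit, Sum.elim_eq_iff, Fin.forall_iff, forall_and]

theorem vecMul_hankelMatrix [NonUnitalNonAssocSemiring R] [Fintype ι] {L T : ℕ} (e c : ℕ → ι → R)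
    (j : Fin (T - L + 1)) :
    ((fun ir ↦ c ir.1 ir.2) ᵥ* hankelMatrix L T e) j =
      ∑ i ∈ Finset.range L, c i ⬝ᵥ e (i + j) := by
  simp [hankelMatrix, vecMul, dotProduct, Fintype.sum_prod_type, Finset.sum_range]

theorem IsPersistentlyExciting.eq_zero_of_forall_sum_eq_zero {K : Type*} [Field K] [Fintype ι]
    {L T : ℕ} {e : ℕ → ι → K} (he : IsPersistentlyExciting L T e) {c : ℕ → ι → K}
    (h : ∀ j ≤ T - L, ∑ i ∈ Finset.range L, c i ⬝ᵥ e (i + j) = 0) {i : ℕ} (hi : i < L) :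
    c i = 0 := by
  have hrank : (hankelMatrix L T e).rank = Fintype.card (Fin L × ι) := by
    rw [he, Fintype.card_prod, Fintype.card_fin, mul_comm]
  have hker : (fun ir : Fin L × ι ↦ c ir.1 ir.2) = 0 := by
    refine vecMul_injective_of_rank_eq_card hrank (funext fun j ↦ ?_)
    simp only [vecMul_hankelMatrix, zero_vecMul, Pi.zero_apply]
    exact h j (Nat.lt_succ_iff.mp j.isLt)
  exact funext fun r ↦ congrFun hker (⟨i, hi⟩, r)

theorem exists_eventually_zero_extension [Zero R] {L : ℕ} (v : Fin L × ι → R) :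
    ∃ η : ℕ → ι → R, (∀ i ≥ L, η i = 0) ∧ (fun ir : Fin L × ι ↦ η ir.1 ir.2) = v := by
  refine ⟨fun i r ↦ if hi : i < L then v (⟨i, hi⟩, r) else 0, fun i hi ↦ ?_, ?_⟩
  · exact funext fun r ↦ dif_neg hi.not_gt
  · exact funext fun ir ↦ dif_pos ir.1.isLt

end Hankel

section Systems

variable {R σ ι ο : Type*} [CommSemiring R] [Fintype σ] [Fintype ι]

/-- `(u, x, y)` satisfies the equations `x(k+1) = A x(k) + B u(k)` and `y(k) = C x(k) + D u(k)` of
the linear system `(A, B, C, D)` for `k < ℓ`. Signals are total on `ℕ`; their values beyond the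
horizon are irrelevant. -/
def IsStateTrajectory (A : Matrix σ σ R) (B : Matrix σ ι R) (C : Matrix ο σ R) (D : Matrix ο ι R)
    (ℓ : ℕ) (u : ℕ → ι → R) (x : ℕ → σ → R) (y : ℕ → ο → R) : Prop :=
  (∀ k < ℓ, x (k + 1) = A *ᵥ x k + B *ᵥ u k) ∧ ∀ k < ℓ, y k = C *ᵥ x k + D *ᵥ u k

/-- `(u, y)` is an input-output trajectory of length `ℓ` of the linear system `(A, B, C, D)`: some
state sequence explains it. -/
def IsTrajectory (A : Matrix σ σ R) (B : Matrix σ ι R) (C : Matrix ο σ R) (D : Matrix ο ι R)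
    (ℓ : ℕ) (u : ℕ → ι → R) (y : ℕ → ο → R) : Prop :=
  ∃ x, IsStateTrajectory A B C D ℓ u x y

variable {A : Matrix σ σ R} {B : Matrix σ ι R} {C : Matrix ο σ R} {D : Matrix ο ι R}
  {u u' : ℕ → ι → R} {x x' : ℕ → σ → R} {y y' : ℕ → ο → R}

theorem sum_smul_mulVec_add_mulVec {κ τ : Type*} [Fintype κ] (P : Matrix τ σ R) (Q : Matrix τ ι R)
    (α : κ → R) (v : κ → σ → R) (w : κ → ι → R) :
    ∑ j, α j • (P *ᵥ v j + Q *ᵥ w j) = P *ᵥ (∑ j, α j • v j) + Q *ᵥ (∑ j, α j • w j) := by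
  simp only [mulVec_sum, mulVec_smul, smul_add, Finset.sum_add_distrib]

theorem IsStateTrajectory.sum_smul_shift {L T : ℕ} (h : IsStateTrajectory A B C D T u x y)
    (hLT : L ≤ T) (α : Fin (T - L + 1) → R) :
    IsStateTrajectory A B C D L (fun k ↦ ∑ j, α j • u (k + j)) (fun k ↦ ∑ j, α j • x (k + j))
      (fun k ↦ ∑ j, α j • y (k + j)) := by
  refine ⟨fun k hk ↦ ?_, fun k hk ↦ ?_⟩ <;> rw [← sum_smul_mulVec_add_mulVec] <;>
    refine Finset.sum_congr rfl fun j _ ↦ ?_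
  · rw [← h.1 (k + j) (by omega), Nat.add_right_comm]
  · rw [← h.2 (k + j) (by omega)]

theorem IsStateTrajectory.output_eq {ℓ : ℕ} (h : IsStateTrajectory A B C D ℓ u x y)
    (h' : IsStateTrajectory A B C D ℓ u' x' y') (h0 : x 0 = x' 0) (hu : ∀ k < ℓ, u k = u' k)
    {k : ℕ} (hk : k < ℓ) : y k = y' k := by
  have hx : ∀ k ≤ ℓ, x k = x' k := by
    intro k
    induction k with
    | zero => exact fun _ ↦ h0
    | succ k ih => intro hk; rw [h.1 k hk, h'.1 k hk, ih (Nat.le_of_succ_le hk), hu k hk]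
  rw [h.2 k hk, h'.2 k hk, hx k hk.le, hu k hk]

theorem IsTrajectory.congr {ℓ : ℕ} (h : IsTrajectory A B C D ℓ u y) (hu : ∀ k < ℓ, u k = u' k)
    (hy : ∀ k < ℓ, y k = y' k) : IsTrajectory A B C D ℓ u' y' := by
  obtain ⟨x, hdyn, hout⟩ := h
  exact ⟨x, fun k hk ↦ hu k hk ▸ hdyn k hk, fun k hk ↦ hu k hk ▸ hy k hk ▸ hout k hk⟩

end Systems

section LeftKernel

variable {R σ ι : Type*} [CommSemiring R] [Fintype σ] [DecidableEq σ]

/-- The matrix `[B, AB, …, A^{N-1}B]`; for `N` the dimension of the state space it is the Kalman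
controllability matrix. -/
def controllabilityMatrix (A : Matrix σ σ R) (B : Matrix σ ι R) (N : ℕ) :
    Matrix σ (Fin N × ι) R :=
  of fun s tr ↦ (A ^ (tr.1 : ℕ) * B) s tr.2

/-- The input coefficients `(ξ A ^ (k - 1) B, …, ξ B, η 0, η 1, …)` obtained when the dynamics are
substituted `k` times into the functional `ξ ⬝ x(j + k) + ∑ i, η i ⬝ u(i + j + k)`. -/
def pullbackCoeff (A : Matrix σ σ R) (B : Matrix σ ι R) (ξ : σ → R) (η : ℕ → ι → R) :
    ℕ → ℕ → ι → R
  | 0, i => η i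
  | k + 1, 0 => ξ ᵥ* (A ^ k * B)
  | k + 1, i + 1 => pullbackCoeff A B ξ η k i

variable (A : Matrix σ σ R) (B : Matrix σ ι R) (ξ : σ → R) (η : ℕ → ι → R)

theorem pullbackCoeff_add_add (k i l : ℕ) :
    pullbackCoeff A B ξ η (k + l) (i + l) = pullbackCoeff A B ξ η k i := by
  induction l with
  | zero => rfl
  | succ _ ih => exact ih

theorem pullbackCoeff_eq_of_le {k d : ℕ} (hk : k ≤ d) (i : ℕ) :
    pullbackCoeff A B ξ η k i = pullbackCoeff A B ξ η d (i + (d - k)) := by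
  rw [← pullbackCoeff_add_add A B ξ η k i (d - k), Nat.add_sub_cancel' hk]

theorem pullbackCoeff_add_left (k i : ℕ) : pullbackCoeff A B ξ η k (i + k) = η i := by
  simpa only [zero_add, pullbackCoeff] using pullbackCoeff_add_add A B ξ η 0 i k

theorem pullbackCoeff_of_lt {t d : ℕ} (ht : t < d) :
    pullbackCoeff A B ξ η d (d - (t + 1)) = ξ ᵥ* (A ^ t * B) := by
  simpa only [zero_add, pullbackCoeff] using (pullbackCoeff_eq_of_le A B ξ η ht 0).symm

variable {A B ξ η} [Fintype ι] {u : ℕ → ι → R} {x : ℕ → σ → R}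

theorem dotProduct_add_sum_eq_pullback (N k : ℕ) {j : ℕ}
    (hx : ∀ i < j + k, x (i + 1) = A *ᵥ x i + B *ᵥ u i) :
    ξ ⬝ᵥ x (j + k) + ∑ i ∈ Finset.range N, η i ⬝ᵥ u (i + (j + k)) =
      (ξ ᵥ* A ^ k) ⬝ᵥ x j +
        ∑ i ∈ Finset.range (N + k), pullbackCoeff A B ξ η k i ⬝ᵥ u (i + j) := by
  induction k generalizing j with
  | zero => simp [pullbackCoeff]
  | succ k ih =>
    have hstep : (ξ ᵥ* A ^ k) ⬝ᵥ x (j + 1) =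
        (ξ ᵥ* A ^ (k + 1)) ⬝ᵥ x j + (ξ ᵥ* (A ^ k * B)) ⬝ᵥ u j := by
      rw [hx j (by omega), dotProduct_add, dotProduct_mulVec, dotProduct_mulVec, vecMul_vecMul,
        vecMul_vecMul, pow_succ]
    rw [Nat.add_comm k 1, ← Nat.add_assoc j, ih (fun i hi ↦ hx i (by omega)), hstep,
      Nat.add_comm 1 k, ← Nat.add_assoc N, Finset.sum_range_succ']
    simp only [pullbackCoeff, zero_add, Nat.add_right_comm _ 1 j, ← Nat.add_assoc]
    ring

variable {q : Polynomial R} {L T : ℕ}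

theorem sum_coeff_smul_pullbackCoeff_dotProduct_eq_zero (hA : Polynomial.aeval A q = 0)
    (hx : ∀ k < T, x (k + 1) = A *ᵥ x k + B *ᵥ u k) (hη : ∀ i ≥ L, η i = 0)
    (h : ∀ j ≤ T - L, ξ ⬝ᵥ x j + ∑ i ∈ Finset.range L, η i ⬝ᵥ u (i + j) = 0) {j : ℕ}
    (hj : j + q.natDegree ≤ T - L) :
    ∑ i ∈ Finset.range (L + q.natDegree),
      (∑ k ∈ Finset.range (q.natDegree + 1), q.coeff k • pullbackCoeff A B ξ η k i) ⬝ᵥ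
        u (i + j) = 0 := by
  have hpull : ∀ k ∈ Finset.range (q.natDegree + 1), (ξ ᵥ* A ^ k) ⬝ᵥ x j +
      ∑ i ∈ Finset.range (L + q.natDegree), pullbackCoeff A B ξ η k i ⬝ᵥ u (i + j) = 0 := by
    intro k hk
    have hk : k ≤ q.natDegree := Finset.mem_range_succ_iff.mp hk
    have hpad := h (j + k) (by omega)
    rw [← Finset.eventually_constant_sum (N := L) (n := L + (q.natDegree - k))
      (fun i hi ↦ by rw [hη i hi, zero_dotProduct]) (Nat.le_add_right _ _)] at hpad
    rwa [dotProduct_add_sum_eq_pullback _ _ fun i hi ↦ hx i (by omega), Nat.add_assoc,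
      Nat.sub_add_cancel hk] at hpad
  have hstate : ∑ k ∈ Finset.range (q.natDegree + 1), q.coeff k * ((ξ ᵥ* A ^ k) ⬝ᵥ x j) = 0 := by
    rw [Polynomial.aeval_eq_sum_range] at hA
    simpa only [vecMul_sum, vecMul_smul, sum_dotProduct, smul_dotProduct, smul_eq_mul,
      vecMul_zero, zero_dotProduct] using congrArg (fun P ↦ (ξ ᵥ* P) ⬝ᵥ x j) hA
  have hcomb := Finset.sum_eq_zero fun k hk ↦ mul_eq_zero_of_right (q.coeff k) (hpull k hk)
  simp only [sum_dotProduct, smul_dotProduct, smul_eq_mul]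
  rw [Finset.sum_comm]
  simpa only [mul_add, Finset.sum_add_distrib, hstate, zero_add, Finset.mul_sum] using hcomb

end LeftKernel

section Willems

variable {K σ ι ο : Type*} [Field K] [Fintype σ] [DecidableEq σ] [Fintype ι]
  {A : Matrix σ σ K} {B : Matrix σ ι K} {C : Matrix ο σ K} {D : Matrix ο ι K}
  {u : ℕ → ι → K} {x : ℕ → σ → K} {L T : ℕ} {q : Polynomial K}

theorem eq_zero_of_controllabilityMatrix_rank_eq {N : ℕ}
    (h : (controllabilityMatrix A B N).rank = Fintype.card σ) {ξ : σ → K}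
    (hξ : ∀ t, ξ ᵥ* (A ^ t * B) = 0) : ξ = 0 := by
  refine vecMul_injective_of_rank_eq_card h (funext fun tr ↦ ?_)
  simp only [zero_vecMul]
  exact congrFun (hξ tr.1) tr.2

theorem pullbackCoeff_natDegree_eq_zero {ξ : σ → K} {η : ℕ → ι → K} (hq : q.Monic)
    (hA : Polynomial.aeval A q = 0) (hT : L + q.natDegree ≤ T)
    (hx : ∀ k < T, x (k + 1) = A *ᵥ x k + B *ᵥ u k)
    (hu : IsPersistentlyExciting (L + q.natDegree) T u) (hη : ∀ i ≥ L, η i = 0)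
    (h : ∀ j ≤ T - L, ξ ⬝ᵥ x j + ∑ i ∈ Finset.range L, η i ⬝ᵥ u (i + j) = 0) (i : ℕ) :
    pullbackCoeff A B ξ η q.natDegree i = 0 := by
  refine eq_zero_of_monic_shift_combination hq (N := L + q.natDegree) (fun i hi ↦ ?_)
    (fun i hi ↦ ?_) i
  · obtain ⟨l, rfl⟩ := Nat.exists_eq_add_of_le' (Nat.le_of_add_left_le hi)
    rw [pullbackCoeff_add_left, hη l (Nat.le_of_add_le_add_right hi)]
  · have hcomb : ∑ k ∈ Finset.range (q.natDegree + 1), q.coeff k • pullbackCoeff A B ξ η k i = 0 :=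
      hu.eq_zero_of_forall_sum_eq_zero
        (c := fun i ↦ ∑ k ∈ Finset.range (q.natDegree + 1), q.coeff k • pullbackCoeff A B ξ η k i)
        (fun j hj ↦ sum_coeff_smul_pullbackCoeff_dotProduct_eq_zero hA hx hη h (by omega)) hi
    rw [← hcomb]
    refine Finset.sum_congr rfl fun k hk ↦ ?_
    rw [pullbackCoeff_eq_of_le A B ξ η (Finset.mem_range_succ_iff.mp hk)]

theorem stateInput_annihilator_eq_zero {N : ℕ} {ξ : σ → K} {η : ℕ → ι → K}
    (hctrb : (controllabilityMatrix A B N).rank = Fintype.card σ) (hq : q.Monic)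
    (hA : Polynomial.aeval A q = 0) (hT : L + q.natDegree ≤ T)
    (hx : ∀ k < T, x (k + 1) = A *ᵥ x k + B *ᵥ u k)
    (hu : IsPersistentlyExciting (L + q.natDegree) T u) (hη : ∀ i ≥ L, η i = 0)
    (h : ∀ j ≤ T - L, ξ ⬝ᵥ x j + ∑ i ∈ Finset.range L, η i ⬝ᵥ u (i + j) = 0) :
    ξ = 0 ∧ η = 0 := by
  have hzero := pullbackCoeff_natDegree_eq_zero hq hA hT hx hu hη h
  constructor
  · have hmarkov : ∀ t < q.natDegree, ξ ᵥ* (A ^ t * B) = 0 := fun t ht ↦ by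
      rw [← pullbackCoeff_of_lt A B ξ η ht, hzero]
    exact eq_zero_of_controllabilityMatrix_rank_eq hctrb
      (vecMul_pow_mul_eq_zero_of_monic hq hA hmarkov)
  · ext1 i
    rw [← pullbackCoeff_add_left A B ξ η q.natDegree i, hzero, Pi.zero_apply]

theorem stateInputMatrix_mulVec_surjective {N d : ℕ}
    (hctrb : (controllabilityMatrix A B N).rank = Fintype.card σ)
    (hd : (minpoly K A).natDegree ≤ d) (hT : L + d ≤ T)
    (hx : ∀ k < T, x (k + 1) = A *ᵥ x k + B *ᵥ u k) (hu : IsPersistentlyExciting (L + d) T u) :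
    Function.Surjective (stateInputMatrix L T x u).mulVec := by
  obtain ⟨q, hq, hA, rfl⟩ := exists_monic_aeval_eq_zero_natDegree_eq
    (Algebra.IsIntegral.isIntegral A) hd
  refine mulVec_surjective_of_vecMul_injective
    ((injective_iff_map_eq_zero (vecMulLinear _)).mpr fun v hv ↦ ?_)
  obtain ⟨η, hη, hηv⟩ := exists_eventually_zero_extension (v ∘ Sum.inr)
  have hann : ∀ j ≤ T - L,
      (v ∘ Sum.inl) ⬝ᵥ x j + ∑ i ∈ Finset.range L, η i ⬝ᵥ u (i + j) = 0 := by
    intro j hj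
    have hvj := congrFun hv ⟨j, Nat.lt_succ_of_le hj⟩
    rw [vecMulLinear_apply, stateInputMatrix, vecMul_fromRows, ← hηv, Pi.add_apply,
      vecMul_hankelMatrix] at hvj
    exact hvj
  obtain ⟨hξ, rfl⟩ := stateInput_annihilator_eq_zero hctrb hq hA hT hx hu hη hann
  rw [← Sum.elim_comp_inl_inr v, hξ, ← hηv]
  exact Sum.elim_zero_zero

theorem exists_sum_smul_shift_eq {N d : ℕ}
    (hctrb : (controllabilityMatrix A B N).rank = Fintype.card σ)
    (hd : (minpoly K A).natDegree ≤ d) (hT : L + d ≤ T)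
    (hx : ∀ k < T, x (k + 1) = A *ᵥ x k + B *ᵥ u k) (hu : IsPersistentlyExciting (L + d) T u)
    (x₀ : σ → K) (v : ℕ → ι → K) :
    ∃ α : Fin (T - L + 1) → K,
      ∑ j, α j • x j = x₀ ∧ ∀ k < L, ∑ j, α j • u (k + j) = v k := by
  obtain ⟨α, hα⟩ := stateInputMatrix_mulVec_surjective hctrb hd hT hx hu
    (Sum.elim x₀ fun ir ↦ v ir.1 ir.2)
  rw [stateInputMatrix, fromRows_mulVec, Sum.elim_eq_iff] at hα
  refine ⟨α, ?_, fun k hk ↦ ?_⟩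
  · rw [← hα.1]
    ext s
    simp [mulVec, dotProduct, mul_comm]
  · rw [← hankelMatrix_mulVec u α ⟨k, hk⟩, hα.2]

theorem fundamental_lemma_general {N d : ℕ}
    (hctrb : (controllabilityMatrix A B N).rank = Fintype.card σ)
    (hd : (minpoly K A).natDegree ≤ d) (hT : L + d ≤ T) {y : ℕ → ο → K}
    (hxy : IsStateTrajectory A B C D T u x y) (hu : IsPersistentlyExciting (L + d) T u)
    (ub : ℕ → ι → K) (yb : ℕ → ο → K) :
    IsTrajectory A B C D L ub yb ↔
      ∃ α : Fin (T - L + 1) → K, ∀ i : Fin L,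
        (fun s ↦ (hankelMatrix L T (fun k ↦ Sum.elim (y k) (u k)) *ᵥ α) (i, s)) =
          Sum.elim (yb i) (ub i) := by
  have hshift := hxy.sum_smul_shift (Nat.le_of_add_right_le hT)
  simp only [hankelMatrix_sumElim_mulVec_eq_iff]
  constructor
  · rintro ⟨xb, hb⟩
    obtain ⟨α, hx₀, hub⟩ := exists_sum_smul_shift_eq hctrb hd hT hxy.1 hu (xb 0) ub
    exact ⟨α, fun k hk ↦ (hshift α).output_eq hb (by simpa only [zero_add] using hx₀) hub hk, hub⟩
  · rintro ⟨α, hyb, hub⟩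
    exact IsTrajectory.congr ⟨_, hshift α⟩ hub hyb

end Willems

/-- Willems' fundamental lemma. Suppose `(A,B)` is controllable and `(u,y)` (stacked
as `z(k) = [y(k); u(k)]`) is a measured trajectory of `Σ` on `{0,…,T-1}` whose input
is persistently exciting of order `L + n`. Then `(ū,ȳ)` is a trajectory of `Σ` on
`{0,…,L-1}` if and only if there exists `α ∈ ℝ^{T-L+1}` with
`H_L(z_{[0,T-1]}) α = z̄_{[0,L-1]}`. -/
theorem fundamental_lemma {n m p T L : ℕ} (hL : 1 ≤ L) (hT : L + n ≤ T)
    (A : Matrix (Fin n) (Fin n) ℝ) (B : Matrix (Fin n) (Fin m) ℝ)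
    (C : Matrix (Fin p) (Fin n) ℝ) (D : Matrix (Fin p) (Fin m) ℝ)
    -- `(A,B)` is controllable: the controllability matrix `[B, AB, …, A^{n-1}B]`
    -- has rank `n`.
    (hctrb : (Matrix.of fun (i : Fin n) (jl : Fin n × Fin m) =>
      (A ^ (jl.1 : ℕ) * B) i jl.2).rank = n)
    -- measured trajectory of `Σ` on `{0,…,T-1}`
    (u : ℕ → Fin m → ℝ) (y : ℕ → Fin p → ℝ) (x : ℕ → Fin n → ℝ)
    (hdyn : ∀ k < T, x (k + 1) = A.mulVec (x k) + B.mulVec (u k))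
    (hout : ∀ k < T, y k = C.mulVec (x k) + D.mulVec (u k))
    -- the input is persistently exciting of order `L + n`
    (hpe : (Matrix.of fun (ir : Fin (L + n) × Fin m) (j : Fin (T - (L + n) + 1)) =>
      u ((ir.1 : ℕ) + (j : ℕ)) ir.2).rank = m * (L + n))
    (ub : ℕ → Fin m → ℝ) (yb : ℕ → Fin p → ℝ) :
    -- `(ū,ȳ)` is a trajectory of `Σ` on `{0,…,L-1}` ...
    (∃ xb : ℕ → Fin n → ℝ,
      (∀ k < L, xb (k + 1) = A.mulVec (xb k) + B.mulVec (ub k)) ∧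
      (∀ k < L, yb k = C.mulVec (xb k) + D.mulVec (ub k))) ↔
    -- ... iff `z̄_{[0,L-1]} = H_L(z_{[0,T-1]}) α` for some `α`
    (∃ α : Fin (T - L + 1) → ℝ, ∀ i : Fin L,
      (fun s => (Matrix.of fun (is : Fin L × (Fin p ⊕ Fin m)) (j : Fin (T - L + 1)) =>
          Sum.elim (y ((is.1 : ℕ) + (j : ℕ))) (u ((is.1 : ℕ) + (j : ℕ))) is.2).mulVec
        α (i, s)) = Sum.elim (yb (i : ℕ)) (ub (i : ℕ))) :=
  fundamental_lemma_general (hctrb.trans (Fintype.card_fin n).symm)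
    ((minpoly_natDegree_le_card A).trans_eq (Fintype.card_fin n)) hT ⟨hdyn, hout⟩
    (hpe.trans (by rw [Fintype.card_fin])) ub yb
end

section
/- (Finsler's lemma, equivalence (1)⇔(3).) Let Q ∈ ℝ^{n×n} be symmetric and B ∈ ℝ^{m×n} with rank(B) < n. Then wᵀQw < 0 for all nonzero w ∈ ℝ^n with Bw = 0 if and only if there exists μ ∈ ℝ such that Q − μ BᵀB is negative definite. -/
open Matrix

/-!
Let `f w = wᵀQw` and `g w = ‖Bw‖² ≥ 0`. As `f` is negative where `g` vanishes, each `w ≠ 0`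
satisfies `f w < μ * g w` for some `μ`. This inequality persists near `w` and for every larger `μ`,
so a single `μ` serves the whole (compact) unit sphere, hence by homogeneity all nonzero vectors.
-/

open Filter Topology

theorem exists_lt_mul_of_eq_zero_imp_neg {𝕜 : Type*} [Field 𝕜] [LinearOrder 𝕜]
    [IsStrictOrderedRing 𝕜] {a b : 𝕜} (h : b = 0 → a < 0) : ∃ c, a < c * b := by
  by_cases hb : b = 0
  · exact ⟨0, by simpa only [zero_mul] using h hb⟩
  · exact ⟨(a + 1) / b, by simp only [div_mul_cancel₀ _ hb, lt_add_one]⟩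

theorem eventually_forall_lt_mul_of_isCompact {X : Type*} [TopologicalSpace X] {K : Set X}
    (hK : IsCompact K) {f g : X → ℝ} (hf : ContinuousOn f K) (hg : ContinuousOn g K)
    (hg_nonneg : ∀ x ∈ K, 0 ≤ g x) (hneg : ∀ x ∈ K, g x = 0 → f x < 0) :
    ∀ᶠ μ in atTop, ∀ x ∈ K, f x < μ * g x := by
  refine hK.induction_on (p := fun s ↦ ∀ᶠ μ in atTop, ∀ x ∈ s, f x < μ * g x)
    (by simp) (fun s t hst ht ↦ ht.mono fun μ hμ x hx ↦ hμ x (hst hx))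
    (fun s t hs ht ↦ ?_) (fun x hx ↦ ?_)
  · filter_upwards [hs, ht] with μ hμs hμt x hx using hx.elim (hμs x) (hμt x)
  · obtain ⟨c, hc⟩ := exists_lt_mul_of_eq_zero_imp_neg (hneg x hx)
    have h_near : ∀ᶠ y in 𝓝[K] x, f y < c * g y :=
      (hf x hx).eventually_lt (continuousWithinAt_const.mul (hg x hx)) hc
    refine ⟨_, h_near.and self_mem_nhdsWithin, ?_⟩
    filter_upwards [eventually_ge_atTop c] with μ hμ y ⟨hy, hyK⟩
    exact hy.trans_le (mul_le_mul_of_nonneg_right hμ (hg_nonneg y hyK))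

theorem eventually_forall_ne_zero_lt_mul_of_homogeneous {E : Type*} [NormedAddCommGroup E]
    [NormedSpace ℝ E] [ProperSpace E] {f g : E → ℝ} {k : ℕ}
    (hf : ContinuousOn f (Metric.sphere 0 1)) (hg : ContinuousOn g (Metric.sphere 0 1))
    (hf_smul : ∀ c : ℝ, 0 < c → ∀ x, f (c • x) = c ^ k * f x)
    (hg_smul : ∀ c : ℝ, 0 < c → ∀ x, g (c • x) = c ^ k * g x)
    (hg_nonneg : ∀ x, 0 ≤ g x) (hneg : ∀ x, x ≠ 0 → g x = 0 → f x < 0) :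
    ∀ᶠ μ in atTop, ∀ x, x ≠ 0 → f x < μ * g x := by
  have h_sphere : ∀ᶠ μ in atTop, ∀ u ∈ Metric.sphere (0 : E) 1, f u < μ * g u :=
    eventually_forall_lt_mul_of_isCompact (isCompact_sphere 0 1) hf hg
      (fun u _ ↦ hg_nonneg u) fun u hu ↦ hneg u (ne_zero_of_mem_unit_sphere ⟨u, hu⟩)
  filter_upwards [h_sphere] with μ hμ x hx
  have hc : 0 < ‖x‖⁻¹ := inv_pos.2 (norm_pos_iff.2 hx)
  have h_unit : ‖x‖⁻¹ • x ∈ Metric.sphere (0 : E) 1 :=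
    mem_sphere_zero_iff_norm.2 (norm_smul_inv_norm (𝕜 := ℝ) hx)
  have h_scaled : ‖x‖⁻¹ ^ k * f x < ‖x‖⁻¹ ^ k * (μ * g x) := by
    simpa only [hf_smul _ hc, hg_smul _ hc, mul_left_comm μ] using hμ _ h_unit
  exact lt_of_mul_lt_mul_left h_scaled (pow_nonneg hc.le k)

theorem dotProduct_sub_smul_transpose_mul_self_mulVec {R ι κ : Type*} [CommRing R] [Fintype ι]
    [Fintype κ] (Q : Matrix ι ι R) (B : Matrix κ ι R) (μ : R) (w : ι → R) :
    w ⬝ᵥ (Q - μ • (Bᵀ * B)) *ᵥ w = w ⬝ᵥ Q *ᵥ w - μ * (B *ᵥ w ⬝ᵥ B *ᵥ w) := by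
  rw [sub_mulVec, dotProduct_sub, smul_mulVec, dotProduct_smul, smul_eq_mul, ← mulVec_mulVec,
    dotProduct_mulVec w Bᵀ, vecMul_transpose]

theorem smul_dotProduct_smul {R ι : Type*} [CommSemiring R] [Fintype ι] (c : R)
    (v w : ι → R) : (c • v) ⬝ᵥ (c • w) = c ^ 2 * (v ⬝ᵥ w) := by
  rw [smul_dotProduct, dotProduct_smul, smul_eq_mul, smul_eq_mul, sq, mul_assoc]

theorem finsler_one_iff_three_general {ι κ : Type*} [Fintype ι] [Fintype κ]
    (Q : Matrix ι ι ℝ) (B : Matrix κ ι ℝ) :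
    (∀ w : ι → ℝ, w ≠ 0 → B *ᵥ w = 0 → w ⬝ᵥ Q *ᵥ w < 0) ↔
    (∃ μ : ℝ, ∀ w : ι → ℝ, w ≠ 0 → w ⬝ᵥ (Q - μ • (Bᵀ * B)) *ᵥ w < 0) := by
  simp only [dotProduct_sub_smul_transpose_mul_self_mulVec, sub_neg]
  constructor
  · intro hneg
    have h_eventually : ∀ᶠ μ : ℝ in atTop, ∀ w : ι → ℝ, w ≠ 0 →
        w ⬝ᵥ Q *ᵥ w < μ * (B *ᵥ w ⬝ᵥ B *ᵥ w) :=
      eventually_forall_ne_zero_lt_mul_of_homogeneous (k := 2) (by fun_prop) (by fun_prop)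
        (fun c _ w ↦ by rw [mulVec_smul, smul_dotProduct_smul])
        (fun c _ w ↦ by rw [mulVec_smul, smul_dotProduct_smul])
        (fun w ↦ dotProduct_self_star_nonneg (B *ᵥ w))
        (fun w hw hBw ↦ hneg w hw (dotProduct_self_eq_zero.1 hBw))
    exact h_eventually.exists
  · rintro ⟨μ, hμ⟩ w hw hBw
    simpa only [hBw, dotProduct_zero, mul_zero] using hμ w hw

/-- Finsler's lemma, equivalence (1) ⇔ (3): for a symmetric `Q` and a matrix `B` of
rank less than `n`, the quadratic form of `Q` is negative on the nonzero kernel of `B`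
iff there exists `μ ∈ ℝ` such that `Q - μ • (Bᵀ * B)` is negative definite. -/
theorem finsler_one_iff_three {n m : ℕ}
    (Q : Matrix (Fin n) (Fin n) ℝ) (hQ : Q.IsSymm)
    (B : Matrix (Fin m) (Fin n) ℝ) (hB : B.rank < n) :
    (∀ w : Fin n → ℝ, w ≠ 0 → B.mulVec w = 0 → w ⬝ᵥ Q.mulVec w < 0) ↔
    (∃ μ : ℝ, ∀ w : Fin n → ℝ, w ≠ 0 →
      w ⬝ᵥ (Q - μ • (Bᵀ * B)).mulVec w < 0) :=
  finsler_one_iff_three_general Q B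
end

section
/- (Finsler's lemma, equivalence (1)⇔(4).) Let Q ∈ ℝ^{n×n} be symmetric and B ∈ ℝ^{m×n} with rank(B) < n. Then wᵀQw < 0 for all nonzero w ∈ ℝ^n with Bw = 0 if and only if there exists X ∈ ℝ^{n×m} such that Q + XB + BᵀXᵀ is negative definite. -/
open Matrix

/-!
Since the term `2 wᵀXBw` vanishes on `ker B`, any `X` forces `wᵀQw < 0` there. Conversely,
compactness of the unit sphere yields a single penalty `c` with `wᵀQw < c ‖Bw‖²` for all unit
vectors `w`, hence by homogeneity for all `w ≠ 0`, and `X = -(c / 2) Bᵀ` turns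
`Q + XB + BᵀXᵀ` into `Q - c BᵀB`.
-/

section Penalty

open Topology

theorem exists_forall_mem_lt_mul_of_isCompact {α : Type*} [TopologicalSpace α] {K : Set α}
    {f g : α → ℝ} (hK : IsCompact K) (hf : ContinuousOn f K) (hg : ContinuousOn g K)
    (hg_nonneg : ∀ x ∈ K, 0 ≤ g x) (hf_neg : ∀ x ∈ K, g x = 0 → f x < 0) :
    ∃ c : ℝ, ∀ x ∈ K, f x < c * g x := by
  have pointwise : ∀ x ∈ K, ∃ c : ℝ, f x < c * g x := by
    intro x hx
    rcases (hg_nonneg x hx).eq_or_lt with hgx | hgx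
    · exact ⟨0, by simpa using hf_neg x hx hgx.symm⟩
    · obtain ⟨c, hc⟩ := exists_gt (f x / g x)
      exact ⟨c, (div_lt_iff₀ hgx).1 hc⟩
  suffices ∃ c : ℝ, ∀ x ∈ K ∩ K, f x < c * g x by simpa only [Set.inter_self] using this
  refine hK.induction_on (p := fun s => ∃ c : ℝ, ∀ x ∈ s ∩ K, f x < c * g x)
    ⟨0, by simp⟩ ?mono ?union ?locally
  case mono => exact fun s t hst ⟨c, hc⟩ => ⟨c, fun x hx => hc x ⟨hst hx.1, hx.2⟩⟩
  case union =>
    rintro s t ⟨c, hc⟩ ⟨d, hd⟩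
    refine ⟨max c d, ?_⟩
    rintro x ⟨hxs | hxt, hxK⟩ <;> have hgx := hg_nonneg x hxK
    · exact (hc x ⟨hxs, hxK⟩).trans_le (by gcongr; exact le_max_left c d)
    · exact (hd x ⟨hxt, hxK⟩).trans_le (by gcongr; exact le_max_right c d)
  case locally =>
    intro x hx
    obtain ⟨c, hc⟩ := pointwise x hx
    have near : ∀ᶠ y in 𝓝[K] x, f y < c * g y :=
      (hf x hx).eventually_lt (continuousWithinAt_const.mul (hg x hx)) hc
    exact ⟨_, near, c, fun y hy => hy.1⟩

theorem quadraticMap_continuous_of_finiteDimensional {𝕜 E F : Type*}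
    [NontriviallyNormedField 𝕜] [CompleteSpace 𝕜]
    [AddCommGroup E] [Module 𝕜 E] [TopologicalSpace E] [IsTopologicalAddGroup E]
    [ContinuousSMul 𝕜 E] [T2Space E] [FiniteDimensional 𝕜 E]
    [AddCommGroup F] [Module 𝕜 F] [TopologicalSpace F] [IsTopologicalAddGroup F]
    [ContinuousSMul 𝕜 F] (Q : QuadraticMap 𝕜 E F) : Continuous Q := by
  obtain ⟨b, rfl⟩ := LinearMap.BilinMap.toQuadraticMap_surjective Q
  let e := Module.finBasis 𝕜 E
  have expand : b.toQuadraticMap = fun x => ∑ i, e.coord i x • b.flip (e i) x := by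
    ext x
    calc b x x = b x (∑ i, e.coord i x • e i) := by simp only [e.coord_apply, e.sum_repr]
      _ = ∑ i, e.coord i x • b.flip (e i) x := by
        simp only [map_sum, map_smul, LinearMap.flip_apply]
  rw [expand]
  exact continuous_finsetSum _ fun i _ =>
    (e.coord i).continuous_of_finiteDimensional.smul
      (b.flip (e i)).continuous_of_finiteDimensional

variable {E : Type*} [NormedAddCommGroup E] [NormedSpace ℝ E]

theorem quadraticForm_posDef_of_pos_on_sphere {Q : QuadraticForm ℝ E}
    (hQ : ∀ x ∈ Metric.sphere (0 : E) 1, 0 < Q x) : Q.PosDef := by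
  intro x hx
  have hx_norm : 0 < ‖x‖ := norm_pos_iff.2 hx
  have hx_unit : ‖x‖⁻¹ • x ∈ Metric.sphere (0 : E) 1 := by simp [norm_smul, hx_norm.ne']
  have hQx : 0 < ‖x‖⁻¹ * ‖x‖⁻¹ * Q x := by
    simpa only [QuadraticMap.map_smul, smul_eq_mul] using hQ _ hx_unit
  exact pos_of_mul_pos_right hQx (by positivity)

theorem exists_posDef_smul_sub [FiniteDimensional ℝ E] {P Q : QuadraticForm ℝ E}
    (hP : ∀ x, 0 ≤ P x) (hQ : ∀ x, x ≠ 0 → P x = 0 → Q x < 0) :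
    ∃ c : ℝ, (c • P - Q).PosDef := by
  obtain ⟨c, hc⟩ := exists_forall_mem_lt_mul_of_isCompact (isCompact_sphere (0 : E) 1)
    (quadraticMap_continuous_of_finiteDimensional Q).continuousOn
    (quadraticMap_continuous_of_finiteDimensional P).continuousOn
    (fun x _ => hP x) (fun x hx => hQ x (ne_zero_of_mem_unit_sphere ⟨x, hx⟩))
  exact ⟨c, quadraticForm_posDef_of_pos_on_sphere fun x hx => sub_pos.2 (hc x hx)⟩

end Penalty

section Matrix

variable {m n R : Type*} [Fintype m] [Fintype n]

theorem dotProduct_add_mul_add_transpose_mulVec [CommSemiring R] (Q : Matrix n n R)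
    (B : Matrix m n R) (X : Matrix n m R) (w : n → R) :
    w ⬝ᵥ (Q + X * B + Bᵀ * Xᵀ) *ᵥ w = w ⬝ᵥ Q *ᵥ w + 2 * (w ⬝ᵥ X *ᵥ (B *ᵥ w)) := by
  have transpose_term : w ⬝ᵥ (Bᵀ * Xᵀ) *ᵥ w = w ⬝ᵥ (X * B) *ᵥ w := by
    rw [← transpose_mul, dotProduct_transpose_mulVec]
  rw [add_mulVec, add_mulVec, dotProduct_add, dotProduct_add, transpose_term, ← mulVec_mulVec]
  ring

theorem dotProduct_transpose_mul_self_mulVec [CommSemiring R] (B : Matrix m n R) (w : n → R) :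
    w ⬝ᵥ (Bᵀ * B) *ᵥ w = B *ᵥ w ⬝ᵥ B *ᵥ w := by
  rw [← mulVec_mulVec, dotProduct_transpose_mulVec]

theorem toQuadraticForm'_apply [DecidableEq n] [CommRing R] (M : Matrix n n R) (w : n → R) :
    M.toQuadraticForm' w = w ⬝ᵥ M *ᵥ w :=
  toLinearMap₂'_apply' M w w

theorem exists_forall_dotProduct_mulVec_lt (Q : Matrix n n ℝ) (B : Matrix m n ℝ)
    (hQ : ∀ w : n → ℝ, w ≠ 0 → B *ᵥ w = 0 → w ⬝ᵥ Q *ᵥ w < 0) :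
    ∃ c : ℝ, ∀ w : n → ℝ, w ≠ 0 → w ⬝ᵥ Q *ᵥ w < c * (B *ᵥ w ⬝ᵥ B *ᵥ w) := by
  classical
  have gram_apply (w : n → ℝ) : (Bᵀ * B).toQuadraticForm' w = B *ᵥ w ⬝ᵥ B *ᵥ w := by
    rw [toQuadraticForm'_apply, dotProduct_transpose_mul_self_mulVec]
  obtain ⟨c, hc⟩ := exists_posDef_smul_sub (P := (Bᵀ * B).toQuadraticForm')
    (Q := Q.toQuadraticForm')
    (fun w => by
      rw [gram_apply]
      exact dotProduct_self_star_nonneg (B *ᵥ w))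
    (fun w hw hBw => by
      rw [gram_apply, dotProduct_self_eq_zero] at hBw
      rw [toQuadraticForm'_apply]
      exact hQ w hw hBw)
  refine ⟨c, fun w hw => sub_pos.1 ?_⟩
  rw [← gram_apply, ← toQuadraticForm'_apply]
  exact hc w hw

theorem finsler_one_iff_four_general (Q : Matrix n n ℝ) (B : Matrix m n ℝ) :
    (∀ w : n → ℝ, w ≠ 0 → B *ᵥ w = 0 → w ⬝ᵥ Q *ᵥ w < 0) ↔
      ∃ X : Matrix n m ℝ, ∀ w : n → ℝ, w ≠ 0 → w ⬝ᵥ (Q + X * B + Bᵀ * Xᵀ) *ᵥ w < 0 := by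
  constructor
  · intro hQ
    obtain ⟨c, hc⟩ := exists_forall_dotProduct_mulVec_lt Q B hQ
    refine ⟨-(c / 2) • Bᵀ, fun w hw => ?_⟩
    calc w ⬝ᵥ (Q + (-(c / 2) • Bᵀ) * B + Bᵀ * (-(c / 2) • Bᵀ)ᵀ) *ᵥ w
      _ = w ⬝ᵥ Q *ᵥ w - c * (B *ᵥ w ⬝ᵥ B *ᵥ w) := by
        rw [dotProduct_add_mul_add_transpose_mulVec, smul_mulVec, dotProduct_smul,
          dotProduct_transpose_mulVec, smul_eq_mul]
        ring
      _ < 0 := sub_neg.2 (hc w hw)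
  · rintro ⟨X, hX⟩ w hw hBw
    simpa only [dotProduct_add_mul_add_transpose_mulVec, hBw, mulVec_zero, dotProduct_zero,
      mul_zero, add_zero] using hX w hw

end Matrix

/-- Finsler's lemma, equivalence (1) ⇔ (4): for a symmetric `Q` and a matrix `B` of
rank less than `n`, the quadratic form of `Q` is negative on the nonzero kernel of `B`
iff there exists `X ∈ ℝ^{n×m}` such that `Q + X*B + Bᵀ*Xᵀ` is negative definite. -/
theorem finsler_one_iff_four {n m : ℕ}
    (Q : Matrix (Fin n) (Fin n) ℝ) (hQ : Q.IsSymm)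
    (B : Matrix (Fin m) (Fin n) ℝ) (hB : B.rank < n) :
    (∀ w : Fin n → ℝ, w ≠ 0 → B.mulVec w = 0 → w ⬝ᵥ Q.mulVec w < 0) ↔
    (∃ X : Matrix (Fin n) (Fin m) ℝ, ∀ w : Fin n → ℝ, w ≠ 0 →
      w ⬝ᵥ (Q + X * B + Bᵀ * Xᵀ).mulVec w < 0) :=
  finsler_one_iff_four_general Q B
end

section
/- Let y, u : ℕ → ℝ satisfy y(k+2) + y(k+1) + y(k) = u(k) for all k ≥ 0, with zero initial conditions y(0) = y(1) = 0. Then for every K ≥ 0, Σ_{k=0}^{K-1} w₁(k) = y(K+1)² + y(K)², and in particular Σ_{k=0}^{K-1} w₁(k) ≥ 0, where w₁(k) = u(k)² − 2y(k)u(k) − 2y(k+1)u(k) + 2y(k)y(k+1) + y(k+1)². -/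
open Finset

/-- The supply rate `w₁(k)` of the input-output pair `(u, y)`, for signals valued in an arbitrary
ring. -/
def msdSupplyRate {R : Type*} [Ring R] (y u : ℕ → R) (k : ℕ) : R :=
  u k ^ 2 - 2 * y k * u k - 2 * y (k + 1) * u k + 2 * y k * y (k + 1) + y (k + 1) ^ 2

/-- The storage function of the mass-spring-damper system: the energy held at time `k` in the state
`(y k, y (k + 1))`, whose increments along trajectories are the supply rate. -/
def msdStorage {R : Type*} [Semiring R] (y : ℕ → R) (k : ℕ) : R :=
  y (k + 1) ^ 2 + y k ^ 2

section CommRing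

variable {R : Type*} [CommRing R] {y u : ℕ → R}

theorem msdSupplyRate_eq_sq_sub_sq (y u : ℕ → R) (k : ℕ) :
    msdSupplyRate y u k = (u k - y (k + 1) - y k) ^ 2 - y k ^ 2 := by
  unfold msdSupplyRate
  ring

theorem msdSupplyRate_eq_msdStorage_sub {k : ℕ} (hk : y (k + 2) + y (k + 1) + y k = u k) :
    msdSupplyRate y u k = msdStorage y (k + 1) - msdStorage y k := by
  have next_output : u k - y (k + 1) - y k = y (k + 2) := by
    rw [← hk]
    ring
  calc
    msdSupplyRate y u k = y (k + 2) ^ 2 - y k ^ 2 := by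
      rw [msdSupplyRate_eq_sq_sub_sq, next_output]
    _ = msdStorage y (k + 1) - msdStorage y k := by
      unfold msdStorage
      ring

theorem sum_range_msdSupplyRate (hsys : ∀ k, y (k + 2) + y (k + 1) + y k = u k) (K : ℕ) :
    ∑ k ∈ range K, msdSupplyRate y u k = msdStorage y K - msdStorage y 0 := by
  simp only [msdSupplyRate_eq_msdStorage_sub (hsys _), sum_range_sub]

end CommRing

section Ordered

variable {R : Type*} [CommRing R] [LinearOrder R] [IsOrderedRing R]

theorem msdStorage_nonneg (y : ℕ → R) (k : ℕ) : 0 ≤ msdStorage y k :=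
  add_nonneg (sq_nonneg _) (sq_nonneg _)

theorem msd_supply_sum_nonneg_general {y u : ℕ → R}
    (hsys : ∀ k, y (k + 2) + y (k + 1) + y k = u k) (K : ℕ) :
    ∑ k ∈ range K, msdSupplyRate y u k = msdStorage y K - msdStorage y 0 ∧
      -msdStorage y 0 ≤ ∑ k ∈ range K, msdSupplyRate y u k := by
  have balance := sum_range_msdSupplyRate hsys K
  refine ⟨balance, ?_⟩
  rw [balance, neg_le_sub_iff_le_add]
  exact le_add_of_nonneg_left (msdStorage_nonneg y K)

end Ordered

/-- For the mass-spring-damper system `y(k+2) + y(k+1) + y(k) = u(k)` with zero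
initial conditions `y(0) = y(1) = 0`, the partial sums of the supply rate
`w₁(k) = u(k)² − 2y(k)u(k) − 2y(k+1)u(k) + 2y(k)y(k+1) + y(k+1)²`
equal `y(K+1)² + y(K)²`, and in particular are nonnegative. -/
theorem msd_supply_sum_nonneg (y u : ℕ → ℝ)
    (hsys : ∀ k : ℕ, y (k + 2) + y (k + 1) + y k = u k)
    (h0 : y 0 = 0) (h1 : y 1 = 0) :
    ∀ K : ℕ,
      (∑ k ∈ Finset.range K,
        (u k ^ 2 - 2 * y k * u k - 2 * y (k + 1) * u k
          + 2 * y k * y (k + 1) + y (k + 1) ^ 2)) = y (K + 1) ^ 2 + y K ^ 2 ∧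
      0 ≤ ∑ k ∈ Finset.range K,
        (u k ^ 2 - 2 * y k * u k - 2 * y (k + 1) * u k
          + 2 * y k * y (k + 1) + y (k + 1) ^ 2) := by
  intro K
  simpa [msdStorage, msdSupplyRate, h0, h1] using msd_supply_sum_nonneg_general hsys K
end
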